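/- arXiv:math/0210439 — 3 statements merged into one kernel-verified Lean document; each statement's English description precedes it below -/
import Mathlib

section
/- Let D be a triangulated category and let a_m →^{d_m} a_{m-1} → ... → a_1 →^{d_1} a_0 be a bounded complex of objects of D (i.e. d_i ∘ d_{i+1} = 0 for 1 ≤ i < m) satisfying Hom_D(a_p[r], a_q) = 0 for all p > q and all r > 0. Then there exists a right convolution d_0 : a_0 → a of this complex, and the pair (a, d_0) is uniquely determined up to isomorphism. -/
/-!
Statement 0 (Kawamata, "Equivalences of derived categories of sheaves on smooth stacks",
cf. Orlov, Lemma 1.5).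

Let `D` be a triangulated category and let
`a_m →^{d_m} a_{m-1} → ... → a_1 →^{d_1} a_0`
be a bounded complex of objects of `D` (i.e. `d_i ∘ d_{i+1} = 0` for `1 ≤ i < m`)
satisfying `Hom_D(a_p[r], a_q) = 0` for all `p > q` and all `r > 0`.  Then there exists a
right convolution `d_0 : a_0 → a` of this complex, and the pair `(a, d_0)` is uniquely
determined up to isomorphism.

We encode the complex with *top-down* indexing: `b i` is the object `a_{m-i}`
(so `b 0 = a_m` is the top and `b m = a_0` is the bottom), and `d i : b i ⟶ b (i+1)`
is the differential `a_{m-i} → a_{m-i-1}`.  The inductive predicate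
`IsRightConvolution m b d c e` expresses that `e : b m ⟶ c` (i.e. `a_0 → a`) is a right
convolution of the complex, following exactly the inductive construction described in the
paper: for `m = 0`, `a = a_0` and `d_0 = Id`; for `m ≥ 1` one chooses a distinguished
triangle `a_m → a_{m-1} → a'_{m-1} → a_m[1]` on the top differential, a morphism
`d'_{m-1} : a'_{m-1} → a_{m-2}` with `d'_{m-1} ∘ j_{m-1} = d_{m-1}`, and takes a right
convolution of the shorter complex `a'_{m-1} → a_{m-2} → ... → a_0`.
-/

open CategoryTheory CategoryTheory.Limits CategoryTheory.Pretriangulated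

universe v u

variable {D : Type u} [Category.{v} D] [HasZeroObject D] [HasShift D ℤ]
  [Preadditive D] [∀ n : ℤ, (CategoryTheory.shiftFunctor D n).Additive] [Pretriangulated D]

/-- The objects of the complex obtained by replacing the two top terms `a_m → a_{m-1}`
of the complex `b` (top-down indexing) by the cone `x`. -/
def truncObj (b : ℕ → D) (x : D) : ℕ → D
  | 0 => x
  | k + 1 => b (k + 2)

/-- The differentials of the shortened complex: the new top differential is the induced
morphism `d₀ : x ⟶ b 2`, and the remaining differentials are unchanged. -/
def truncMap (b : ℕ → D) (d : ∀ i, b i ⟶ b (i + 1)) (x : D) (d₀ : x ⟶ b 2) :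
    ∀ i, truncObj b x i ⟶ truncObj b x (i + 1)
  | 0 => d₀
  | k + 1 => d (k + 2)

/-- `IsRightConvolution m b d c e` : the morphism `e : b m ⟶ c` (from the bottom object
`a_0 = b m` of the complex to `c`) is a right convolution of the length-`m` complex with
objects `b 0, ..., b m` (written top-down) and differentials `d i : b i ⟶ b (i+1)`. -/
inductive IsRightConvolution :
    ∀ (m : ℕ) (b : ℕ → D) (_ : ∀ i, b i ⟶ b (i + 1)) (c : D), (b m ⟶ c) → Prop
  | zero (b : ℕ → D) (d : ∀ i, b i ⟶ b (i + 1)) :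
      IsRightConvolution 0 b d (b 0) (𝟙 (b 0))
  | one (b : ℕ → D) (d : ∀ i, b i ⟶ b (i + 1)) (x : D) (j : b 1 ⟶ x)
      (δ : x ⟶ (b 0)⟦(1 : ℤ)⟧)
      (_ : Triangle.mk (d 0) j δ ∈ distTriang D) :
      IsRightConvolution 1 b d x j
  | step (m : ℕ) (b : ℕ → D) (d : ∀ i, b i ⟶ b (i + 1)) (x : D) (j : b 1 ⟶ x)
      (δ : x ⟶ (b 0)⟦(1 : ℤ)⟧)
      (_ : Triangle.mk (d 0) j δ ∈ distTriang D)
      (d₀ : x ⟶ b 2) (_ : j ≫ d₀ = d 1)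
      (c : D) (e : b (m + 2) ⟶ c)
      (_ : IsRightConvolution (m + 1) (truncObj b x) (truncMap b d x d₀) c e) :
      IsRightConvolution (m + 2) b d c e

/-!
Let `x_k` be the iterated cone at the `k`-th stage of the construction.  It is an iterated
extension of the shifts `b i⟦k - i⟧`, so a group `Hom(x_k⟦1⟧, b l)` vanishes as soon as the
groups `Hom(b i⟦k - i + 1⟧, b l)` do.  With `l = k + 3` this makes the composite of the first
two differentials of the shortened complex zero, so that the construction can continue.  With
`l = k + 2` it makes the first differential unique, so that an isomorphism of complexes
extends to the shortened complexes; the cones themselves are isomorphic by (TR3) and the five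
lemma.
-/

section DistinguishedTriangles

variable {T : Triangle D}

theorem eq_zero_of_shift_obj₃_of_distTriang (hT : T ∈ distTriang D) {Y : D} {r : ℤ}
    (h₁ : ∀ g : T.obj₁⟦r + 1⟧ ⟶ Y, g = 0) (h₂ : ∀ g : T.obj₂⟦r⟧ ⟶ Y, g = 0)
    (g : T.obj₃⟦r⟧ ⟶ Y) : g = 0 := by
  obtain ⟨δ, k, hk⟩ :
      ∃ (δ : T.obj₃⟦r⟧ ⟶ T.obj₁⟦r⟧⟦(1 : ℤ)⟧) (k : T.obj₁⟦r⟧⟦(1 : ℤ)⟧ ⟶ Y), g = δ ≫ k :=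
    ⟨_, Triangle.yoneda_exact₃ _ (Triangle.shift_distinguished T hT r) g (h₂ _)⟩
  have hk_zero : k = 0 := by
    rw [← cancel_epi ((shiftFunctorAdd D r 1).hom.app T.obj₁), comp_zero]
    exact h₁ _
  rw [hk, hk_zero, comp_zero]

theorem hom_obj₃_ext_of_distTriang (hT : T ∈ distTriang D) {Y : D}
    (h₁ : ∀ g : T.obj₁⟦(1 : ℤ)⟧ ⟶ Y, g = 0) {g g' : T.obj₃ ⟶ Y}
    (h : T.mor₂ ≫ g = T.mor₂ ≫ g') : g = g' := by
  obtain ⟨k, hk⟩ := T.yoneda_exact₃ hT (g - g') (by rw [Preadditive.comp_sub, h, sub_self])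
  rw [← sub_eq_zero, hk, h₁ k, comp_zero]

theorem exists_iso_obj₃_of_distTriang {T' : Triangle D} (hT : T ∈ distTriang D)
    (hT' : T' ∈ distTriang D) (α : T.obj₁ ≅ T'.obj₁) (β : T.obj₂ ≅ T'.obj₂)
    (comm : T.mor₁ ≫ β.hom = α.hom ≫ T'.mor₁) :
    ∃ γ : T.obj₃ ≅ T'.obj₃, T.mor₂ ≫ γ.hom = β.hom ≫ T'.mor₂ := by
  let e := isoTriangleOfIso₁₂ T T' hT hT' α β comm
  exact ⟨Triangle.π₃.mapIso e, by simp [e]⟩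

end DistinguishedTriangles

/-- The groups `Hom(b i⟦r⟧, b j)` with `r > 0` and `j = i + r + s ≤ m` vanish, that is,
`Hom(a_p[r], a_q) = 0` for `p - q = r + s`.  The offset `s = 2` governs the existence of right
convolutions and `s = 1` their uniqueness. -/
def ShiftedHomVanishing (m : ℕ) (b : ℕ → D) (s : ℕ) : Prop :=
  ∀ (i j : ℕ) (r : ℤ), 0 < r → (j : ℤ) = i + r + s → j ≤ m → ∀ f : (b i)⟦r⟧ ⟶ b j, f = 0

section Truncation

variable {m : ℕ} {b b' : ℕ → D} {d : ∀ i, b i ⟶ b (i + 1)} {d' : ∀ i, b' i ⟶ b' (i + 1)}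
  {x x' : D} {j : b 1 ⟶ x} {j' : b' 1 ⟶ x'} {δ : x ⟶ (b 0)⟦(1 : ℤ)⟧}

theorem ShiftedHomVanishing.truncObj {s : ℕ} (hb : ShiftedHomVanishing (m + 1) b s)
    {f : b 0 ⟶ b 1} (hT : Triangle.mk f j δ ∈ distTriang D) :
    ShiftedHomVanishing m (truncObj b x) s := by
  intro i k r hr hk hkm
  obtain ⟨l, rfl⟩ : ∃ l, k = l + 1 := ⟨k - 1, by omega⟩
  cases i with
  | zero =>
    exact eq_zero_of_shift_obj₃_of_distTriang hT
      (hb 0 (l + 2) (r + 1) (by omega) (by omega) (by omega))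
      (hb 1 (l + 2) r hr (by omega) (by omega))
  | succ i => exact hb (i + 2) (l + 2) r hr (by omega) (by omega)

theorem truncMap_comp_truncMap (hd : ∀ i, i + 1 < m + 1 → d i ≫ d (i + 1) = 0)
    (hb : ShiftedHomVanishing (m + 1) b 2) (hT : Triangle.mk (d 0) j δ ∈ distTriang D)
    {d₀ : x ⟶ b 2} (hd₀ : j ≫ d₀ = d 1) (i : ℕ) (hi : i + 1 < m) :
    truncMap b d x d₀ i ≫ truncMap b d x d₀ (i + 1) = 0 := by
  cases i with
  | zero =>
    refine hom_obj₃_ext_of_distTriang hT (hb 0 3 1 (by omega) (by omega) (by omega)) ?_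
    calc j ≫ d₀ ≫ d 2 = d 1 ≫ d 2 := by rw [← Category.assoc, hd₀]
      _ = 0 := hd 1 (by omega)
      _ = j ≫ 0 := comp_zero.symm
  | succ i => exact hd (i + 2) (by omega)

/-- The family of isomorphisms between two shortened complexes given by an isomorphism `γ` of
the cones and the isomorphisms `φ` of the remaining objects. -/
def truncIso (φ : ∀ i, b i ≅ b' i) (γ : x ≅ x') : ∀ i, truncObj b x i ≅ truncObj b' x' i
  | 0 => γ
  | k + 1 => φ (k + 2)

theorem truncMap_comp_truncIso_hom {φ : ∀ i, b i ≅ b' i}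
    (hφ : ∀ i < m + 1, d i ≫ (φ (i + 1)).hom = (φ i).hom ≫ d' i)
    (hb : ShiftedHomVanishing (m + 1) b 1) (hT : Triangle.mk (d 0) j δ ∈ distTriang D)
    {d₀ : x ⟶ b 2} (hd₀ : j ≫ d₀ = d 1) {d₀' : x' ⟶ b' 2} (hd₀' : j' ≫ d₀' = d' 1)
    {γ : x ≅ x'} (hγ : j ≫ γ.hom = (φ 1).hom ≫ j') (i : ℕ) (hi : i < m) :
    truncMap b d x d₀ i ≫ (truncIso φ γ (i + 1)).hom =
      (truncIso φ γ i).hom ≫ truncMap b' d' x' d₀' i := by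
  cases i with
  | zero =>
    have hom_eq_zero (g : (b 0)⟦(1 : ℤ)⟧ ⟶ b' 2) : g = 0 := by
      rw [← cancel_mono (φ 2).inv, zero_comp]
      exact hb 0 2 1 (by omega) (by omega) (by omega) _
    refine hom_obj₃_ext_of_distTriang hT hom_eq_zero ?_
    calc j ≫ d₀ ≫ (φ 2).hom = d 1 ≫ (φ 2).hom := by rw [← Category.assoc, hd₀]
      _ = (φ 1).hom ≫ d' 1 := hφ 1 (by omega)
      _ = j ≫ γ.hom ≫ d₀' := by rw [← hd₀', ← Category.assoc, ← hγ, Category.assoc]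
  | succ i => exact hφ (i + 2) (by omega)

end Truncation

theorem exists_isRightConvolution {m : ℕ} {b : ℕ → D} {d : ∀ i, b i ⟶ b (i + 1)}
    (hd : ∀ i, i + 1 < m → d i ≫ d (i + 1) = 0) (hb : ShiftedHomVanishing m b 2) :
    ∃ (c : D) (e : b m ⟶ c), IsRightConvolution m b d c e := by
  induction m generalizing b with
  | zero => exact ⟨_, _, .zero b d⟩
  | succ m ih =>
    obtain ⟨x, j, δ, hT⟩ := distinguished_cocone_triangle (d 0)
    cases m with
    | zero => exact ⟨x, j, .one b d x j δ hT⟩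
    | succ m =>
      obtain ⟨d₀, hd₀⟩ : ∃ d₀ : x ⟶ b 2, d 1 = j ≫ d₀ :=
        Triangle.yoneda_exact₂ _ hT (d 1) (hd 0 (by omega))
      obtain ⟨c, e, he⟩ :=
        ih (truncMap_comp_truncMap hd hb hT hd₀.symm) (hb.truncObj hT)
      exact ⟨c, e, .step m b d x j δ hT d₀ hd₀.symm c e he⟩

theorem IsRightConvolution.exists_iso {m : ℕ} {b b' : ℕ → D} {d : ∀ i, b i ⟶ b (i + 1)}
    {d' : ∀ i, b' i ⟶ b' (i + 1)} {c c' : D} {e : b m ⟶ c} {e' : b' m ⟶ c'}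
    (he : IsRightConvolution m b d c e) (he' : IsRightConvolution m b' d' c' e')
    (φ : ∀ i, b i ≅ b' i) (hφ : ∀ i < m, d i ≫ (φ (i + 1)).hom = (φ i).hom ≫ d' i)
    (hb : ShiftedHomVanishing m b 1) :
    ∃ ψ : c ≅ c', e ≫ ψ.hom = (φ m).hom ≫ e' := by
  induction he generalizing b' with
  | zero =>
    cases he'
    exact ⟨φ 0, by rw [Category.id_comp, Category.comp_id]⟩
  | one _ _ _ _ _ hT =>
    cases he' with
    | one _ _ _ _ _ hT' =>
      exact exists_iso_obj₃_of_distTriang hT hT' (φ 0) (φ 1) (hφ 0 (by omega))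
  | step _ _ _ _ _ _ hT _ hd₀ _ _ _ ih =>
    cases he' with
    | step _ _ _ _ _ _ hT' _ hd₀' _ _ he' =>
      obtain ⟨γ, hγ⟩ :=
        exists_iso_obj₃_of_distTriang hT hT' (φ 0) (φ 1) (hφ 0 (by omega))
      exact ih he' (truncIso φ γ) (truncMap_comp_truncIso_hom hφ hb hT hd₀ hd₀' hγ)
        (hb.truncObj hT)

theorem right_convolution_exists_and_unique_up_to_iso_general
    (m : ℕ) (b : ℕ → D) (d : ∀ i, b i ⟶ b (i + 1)) :
    ((∀ i, i + 1 < m → d i ≫ d (i + 1) = 0) → ShiftedHomVanishing m b 2 →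
      ∃ (c : D) (e : b m ⟶ c), IsRightConvolution m b d c e) ∧
    (ShiftedHomVanishing m b 1 → ∀ (c₁ c₂ : D) (e₁ : b m ⟶ c₁) (e₂ : b m ⟶ c₂),
      IsRightConvolution m b d c₁ e₁ → IsRightConvolution m b d c₂ e₂ →
      ∃ φ : c₁ ≅ c₂, e₁ ≫ φ.hom = e₂) := by
  refine ⟨exists_isRightConvolution, fun hb _ _ _ _ h₁ h₂ => ?_⟩
  simpa only [Iso.refl_hom, Category.id_comp] using
    h₁.exists_iso h₂ (fun _ => Iso.refl _) (fun _ _ => by simp) hb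

/-- A bounded complex `a_m → ... → a_0` in a triangulated category with
`Hom(a_p[r], a_q) = 0` for `p > q`, `r > 0` admits a right convolution `d_0 : a_0 → a`,
unique up to isomorphism (compatibly with `d_0`).  Here `b i = a_{m-i}`, so the conditions
`p > q` and `r > 0` become `i < j ≤ m` and `0 < r`. -/
theorem right_convolution_exists_and_unique_up_to_iso
    (m : ℕ) (b : ℕ → D) (d : ∀ i, b i ⟶ b (i + 1))
    (hcomplex : ∀ i, i + 1 < m → d i ≫ d (i + 1) = 0)
    (hvanish : ∀ i j, i < j → j ≤ m → ∀ r : ℤ, 0 < r →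
      ∀ f : (b i)⟦r⟧ ⟶ b j, f = 0) :
    (∃ (c : D) (e : b m ⟶ c), IsRightConvolution m b d c e) ∧
    (∀ (c₁ c₂ : D) (e₁ : b m ⟶ c₁) (e₂ : b m ⟶ c₂),
      IsRightConvolution m b d c₁ e₁ → IsRightConvolution m b d c₂ e₂ →
      ∃ φ : c₁ ≅ c₂, e₁ ≫ φ.hom = e₂) := by
  have hb (s : ℕ) : ShiftedHomVanishing m b s := fun i j r hr hj hjm =>
    hvanish i j (by omega) hjm r hr
  exact (right_convolution_exists_and_unique_up_to_iso_general m b d).imp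
    (fun h => h hcomplex (hb 2)) (fun h => h (hb 1))
end

section
/- Let D be a triangulated category and let f_• : (a_•, d_•) → (b_•, e_•) be a morphism between two bounded complexes a_m → ... → a_0 and b_m → ... → b_0 in D, each satisfying Hom_D(a_p[r], a_q) = 0 and Hom_D(b_p[r], b_q) = 0 for p > q, r > 0. Let d_0 : a_0 → a and e_0 : b_0 → b be right convolutions of these complexes and let ε : b → b' be a morphism. Assume in addition that Hom_D(a_p[r], b_q) = 0 for all p > q and r > 0. Then there exists a morphism f : a → b' with f ∘ d_0 = ε ∘ e_0 ∘ f_0. Moreover, f is unique with this property if Hom_D(a_p[r], b') = 0 for all p and all r > 0. -/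
/-!
Statement 1 (cf. Orlov, Lemma 1.6).

Let `f_• : (a_•, d_•) → (b_•, e_•)` be a morphism between two bounded complexes
`a_m → ... → a_0` and `b_m → ... → b_0` in a triangulated category `D`, each satisfying
`Hom(a_p[r], a_q) = 0` resp. `Hom(b_p[r], b_q) = 0` for `p > q`, `r > 0`.
Let `d_0 : a_0 → a` and `e_0 : b_0 → b` be right convolutions and `ε : b → b'` a morphism.
If moreover `Hom(a_p[r], b_q) = 0` for `p > q`, `r > 0`, then there is `f : a → b'` with
`f ∘ d_0 = ε ∘ e_0 ∘ f_0`; it is unique with this property if `Hom(a_p[r], b') = 0` for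
all `p` and `r > 0`.

Complexes are encoded with *top-down* indexing: `a i` is the object `a_{m-i}` of the
complex (`a 0` is the top, `a m` is the bottom `a_0`), the differential
`da i : a i ⟶ a (i+1)` is `d_{m-i}`, and a morphism of complexes is a family
`f i : a i ⟶ b i` commuting with the differentials.  In particular the component `f_0`
at the bottom objects is `f m`.  The predicate `IsRightConvolution` follows the
inductive construction of right convolutions from the paper.
-/

open CategoryTheory CategoryTheory.Limits CategoryTheory.Pretriangulated

universe v u

variable {D : Type u} [Category.{v} D] [HasZeroObject D] [HasShift D ℤ]
  [Preadditive D] [∀ n : ℤ, (CategoryTheory.shiftFunctor D n).Additive] [Pretriangulated D]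

/-!
Replace the two top terms of each complex by a cone. The long exact sequences for `Hom(-, Y)` of
the cone triangles reduce the vanishing needed for the shortened complexes to that for the given
ones. By TR3 the two top components of `f` induce a map of cones; it is compatible with the next
differentials because morphisms out of the upper cone into `b 2` are determined on `a 1`. Hence
the morphism of complexes descends, and one iterates down to a single triangle. Uniqueness
iterates the same cancellation along the cones.
-/

section Triangle

variable {T : Triangle D} {Y : D}

theorem hom_ext_obj₃_of_distTriang (hT : T ∈ distTriang D)
    (h₁ : ∀ g : T.obj₁⟦(1 : ℤ)⟧ ⟶ Y, g = 0) {φ ψ : T.obj₃ ⟶ Y}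
    (h : T.mor₂ ≫ φ = T.mor₂ ≫ ψ) : φ = ψ := by
  obtain ⟨k, hk⟩ := Triangle.yoneda_exact₃ T hT (φ - ψ) (by rw [Preadditive.comp_sub, h, sub_self])
  rwa [h₁ k, comp_zero, sub_eq_zero] at hk

theorem shift_obj₃_hom_eq_zero_of_distTriang (hT : T ∈ distTriang D) {r : ℤ}
    (h₁ : ∀ g : T.obj₁⟦r + 1⟧ ⟶ Y, g = 0) (h₂ : ∀ g : T.obj₂⟦r⟧ ⟶ Y, g = 0)
    (g : T.obj₃⟦r⟧ ⟶ Y) : g = 0 := by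
  refine hom_ext_obj₃_of_distTriang (Triangle.shift_distinguished T hT r) (fun k => ?_)
    ((h₂ _).trans (h₂ _).symm)
  exact (((shiftFunctorAdd D r 1).app T.obj₁).cancel_iso_hom_left k 0).1
    ((h₁ _).trans comp_zero.symm)

theorem exists_hom_obj₃_comm {T' : Triangle D} (hT : T ∈ distTriang D) (hT' : T' ∈ distTriang D)
    {A B : D} {u : T.obj₃ ⟶ A} {v : T'.obj₃ ⟶ B} {f₁ : T.obj₁ ⟶ T'.obj₁} {f₂ : T.obj₂ ⟶ T'.obj₂}
    {f₃ : A ⟶ B} (h₁ : T.mor₁ ≫ f₂ = f₁ ≫ T'.mor₁)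
    (h₂ : T.mor₂ ≫ u ≫ f₃ = f₂ ≫ T'.mor₂ ≫ v) (hB : ∀ g : T.obj₁⟦(1 : ℤ)⟧ ⟶ B, g = 0) :
    ∃ g : T.obj₃ ⟶ T'.obj₃, u ≫ f₃ = g ≫ v := by
  obtain ⟨g, hg, -⟩ := complete_distinguished_triangle_morphism T T' hT hT' f₁ f₂ h₁
  refine ⟨g, hom_ext_obj₃_of_distTriang hT hB ?_⟩
  rw [h₂, reassoc_of% hg]

end Triangle

/-- `Hom(a_i[n - i], Y) = 0` for all `i < n`. A convolution of `a 0 ⟶ ⋯ ⟶ a n` is an iterated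
extension of the objects `(a i)⟦n - i⟧`, and this condition ensures that a morphism from it to `Y`
is determined on the term `i = n`. The shift `r = n - i` is a variable so that no cast along
an equality of shifts is needed. -/
def DiagonalHomsVanish (a : ℕ → D) (Y : D) (n : ℕ) : Prop :=
  ∀ (i : ℕ) (r : ℤ), 0 < r → i + r = n → ∀ g : (a i)⟦r⟧ ⟶ Y, g = 0

/-- The morphism of shortened complexes induced by `f` and a morphism `g` of the cones. -/
def truncHom {a b : ℕ → D} (f : ∀ i, a i ⟶ b i) {x y : D} (g : x ⟶ y) :
    ∀ i, truncObj a x i ⟶ truncObj b y i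
  | 0 => g
  | k + 1 => f (k + 2)

section Convolution

variable {m : ℕ} {a b : ℕ → D} {da : ∀ i, a i ⟶ a (i + 1)} {db : ∀ i, b i ⟶ b (i + 1)}
  {f : ∀ i, a i ⟶ b i} {ca cb : D} {d₀ : a m ⟶ ca} {e₀ : b m ⟶ cb}

theorem DiagonalHomsVanish.truncObj {x Y : D} {u : a 0 ⟶ a 1} {j : a 1 ⟶ x}
    {δ : x ⟶ (a 0)⟦(1 : ℤ)⟧} {n : ℕ} (h : DiagonalHomsVanish a Y (n + 1))
    (hT : Triangle.mk u j δ ∈ distTriang D) :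
    DiagonalHomsVanish (truncObj a x) Y n
  | 0, r, hr, hrn => shift_obj₃_hom_eq_zero_of_distTriang hT
      (h 0 (r + 1) (by lia) (by lia)) (h 1 r hr (by lia))
  | i + 1, r, hr, hirn => h (i + 2) r hr (by lia)

namespace IsRightConvolution

theorem hom_ext (hca : IsRightConvolution m a da ca d₀) {Y : D} (hY : DiagonalHomsVanish a Y m)
    {φ ψ : ca ⟶ Y} (h : d₀ ≫ φ = d₀ ≫ ψ) : φ = ψ := by
  induction hca with
  | zero => simpa only [Category.id_comp] using h
  | one _ _ _ _ _ hT => exact hom_ext_obj₃_of_distTriang hT (hY 0 1 one_pos (by lia)) h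
  | step _ _ _ _ _ _ hT _ _ _ _ _ ih => exact ih (hY.truncObj hT) h

theorem exists_hom (hca : IsRightConvolution m a da ca d₀) (hcb : IsRightConvolution m b db cb e₀)
    (hf : ∀ i < m, da i ≫ f (i + 1) = f i ≫ db i)
    (hab : ∀ j < m, DiagonalHomsVanish a (b (j + 1)) j) :
    ∃ φ : ca ⟶ cb, d₀ ≫ φ = f m ≫ e₀ := by
  induction hca generalizing b cb with
  | zero =>
    cases hcb
    exact ⟨f 0, (Category.id_comp _).trans (Category.comp_id _).symm⟩
  | one _ _ _ _ _ hT =>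
    cases hcb with
    | one _ _ _ _ _ hT' =>
      obtain ⟨φ, hφ, -⟩ :=
        complete_distinguished_triangle_morphism _ _ hT hT' (f 0) (f 1) (hf 0 one_pos)
      exact ⟨φ, hφ⟩
  | step m a da x j _ hT dx hdx _ _ _ ih =>
    cases hcb with
    | step _ _ _ y k _ hT' dy hdy _ _ hy =>
      obtain ⟨g, hg⟩ : ∃ g : x ⟶ y, dx ≫ f 2 = g ≫ dy :=
        exists_hom_obj₃_comm hT hT' (hf 0 (by lia))
          (show j ≫ dx ≫ f 2 = f 1 ≫ k ≫ dy by rw [reassoc_of% hdx, hdy, hf 1 (by lia)])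
          (hab 1 (by lia) 0 1 one_pos (by lia))
      have hfg : ∀ i < m + 1, truncMap a da x dx i ≫ truncHom f g (i + 1) =
          truncHom f g i ≫ truncMap b db y dy i
        | 0, _ => hg
        | i + 1, hi => hf (i + 2) (by lia)
      exact ih hy hfg fun i hi => (hab (i + 1) (by lia)).truncObj hT

end IsRightConvolution

theorem hom_of_right_convolutions_general (hca : IsRightConvolution m a da ca d₀)
    (hcb : IsRightConvolution m b db cb e₀) (hf : ∀ i < m, da i ≫ f (i + 1) = f i ≫ db i)
    (hab : ∀ j < m, DiagonalHomsVanish a (b (j + 1)) j) {b' : D} (ε : cb ⟶ b') :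
    (∃ φ : ca ⟶ b', d₀ ≫ φ = f m ≫ e₀ ≫ ε) ∧
    (DiagonalHomsVanish a b' m → ∀ φ₁ φ₂ : ca ⟶ b',
      d₀ ≫ φ₁ = f m ≫ e₀ ≫ ε → d₀ ≫ φ₂ = f m ≫ e₀ ≫ ε → φ₁ = φ₂) := by
  obtain ⟨φ, hφ⟩ := hca.exists_hom hcb hf hab
  exact ⟨⟨φ ≫ ε, by rw [reassoc_of% hφ]⟩,
    fun hb' φ₁ φ₂ h₁ h₂ => hca.hom_ext hb' (h₁.trans h₂.symm)⟩

end Convolution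

/-- Existence (and conditional uniqueness) of a morphism between right
convolutions induced by a morphism of complexes, after composition with `ε : b ⟶ b'`. -/
theorem hom_of_right_convolutions
    (m : ℕ) (a : ℕ → D) (da : ∀ i, a i ⟶ a (i + 1))
    (b : ℕ → D) (db : ∀ i, b i ⟶ b (i + 1))
    (hcomplexa : ∀ i, i + 1 < m → da i ≫ da (i + 1) = 0)
    (hcomplexb : ∀ i, i + 1 < m → db i ≫ db (i + 1) = 0)
    (hvanisha : ∀ i j, i < j → j ≤ m → ∀ r : ℤ, 0 < r → ∀ f : (a i)⟦r⟧ ⟶ a j, f = 0)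
    (hvanishb : ∀ i j, i < j → j ≤ m → ∀ r : ℤ, 0 < r → ∀ f : (b i)⟦r⟧ ⟶ b j, f = 0)
    -- the morphism of complexes `f_•`
    (f : ∀ i, a i ⟶ b i)
    (hf : ∀ i, i < m → da i ≫ f (i + 1) = f i ≫ db i)
    -- the right convolutions `d_0 : a_0 → ca` and `e_0 : b_0 → cb`
    (ca cb : D) (d₀ : a m ⟶ ca) (e₀ : b m ⟶ cb)
    (hca : IsRightConvolution m a da ca d₀) (hcb : IsRightConvolution m b db cb e₀)
    -- a further morphism `ε : cb ⟶ b'`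
    (b' : D) (ε : cb ⟶ b')
    -- the additional vanishing `Hom(a_p[r], b_q) = 0` for `p > q`, `r > 0`
    (hvanishab : ∀ i j, i < j → j ≤ m → ∀ r : ℤ, 0 < r → ∀ g : (a i)⟦r⟧ ⟶ b j, g = 0) :
    (∃ φ : ca ⟶ b', d₀ ≫ φ = f m ≫ e₀ ≫ ε) ∧
    ((∀ p, p ≤ m → ∀ r : ℤ, 0 < r → ∀ g : (a p)⟦r⟧ ⟶ b', g = 0) →
      ∀ φ₁ φ₂ : ca ⟶ b', d₀ ≫ φ₁ = f m ≫ e₀ ≫ ε → d₀ ≫ φ₂ = f m ≫ e₀ ≫ ε →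
        φ₁ = φ₂) :=
  (hom_of_right_convolutions_general hca hcb hf
    (fun j hj i r hr hir => hvanishab i (j + 1) (by lia) hj r hr) ε).imp_right
    fun h hb' => h fun p r hr hpr => hb' p (by lia) r hr
end

section
/- Let D and D' be triangulated categories, let a_m → ... → a_0 be a bounded complex in D satisfying Hom_D(a_p[r], a_q) = 0 for p > q, r > 0, and let d_0 : a_0 → a be a right convolution of this complex. If F : D → D' is a fully faithful exact functor, then the complex F(a_m) → F(a_{m-1}) → ... → F(a_1) → F(a_0) in D' satisfies Hom_{D'}(F(a_p)[r], F(a_q)) = 0 for p > q, r > 0, and F(d_0) : F(a_0) → F(a) is a right convolution of it. -/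
/-!
Statement 4.

Let `D` and `D'` be triangulated categories, `a_m → ... → a_0` a bounded complex in `D`
satisfying `Hom_D(a_p[r], a_q) = 0` for `p > q`, `r > 0`, and `d_0 : a_0 → a` a right
convolution.  If `F : D ⥤ D'` is a fully faithful exact functor (i.e. `F` commutes with
the shift and sends distinguished triangles to distinguished triangles), then the image
complex `F(a_m) → ... → F(a_0)` satisfies the corresponding vanishing condition, and
`F(d_0) : F(a_0) → F(a)` is a right convolution of it.

Complexes are encoded with *top-down* indexing: `b i = a_{m-i}`, and the predicate
`IsRightConvolution` follows the inductive construction of right convolutions.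
-/

open CategoryTheory CategoryTheory.Limits CategoryTheory.Pretriangulated

universe v u v' u'

variable {D : Type u} [Category.{v} D] [HasZeroObject D] [HasShift D ℤ]
  [Preadditive D] [∀ n : ℤ, (CategoryTheory.shiftFunctor D n).Additive] [Pretriangulated D]

theorem shift_map_obj_hom_eq_zero {C E A : Type*} [Category* C] [Category* E] [AddMonoid A]
    [HasShift C A] [HasShift E A] [HasZeroMorphisms C] [HasZeroMorphisms E] (F : C ⥤ E)
    [F.CommShift A] [F.Full] [F.PreservesZeroMorphisms] {X Y : C} {r : A}
    (h : ∀ f : X⟦r⟧ ⟶ Y, f = 0) (g : (F.obj X)⟦r⟧ ⟶ F.obj Y) : g = 0 := by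
  obtain ⟨f, hf⟩ := F.map_surjective ((F.commShiftIso r).hom.app X ≫ g)
  rw [← cancel_epi ((F.commShiftIso r).hom.app X), comp_zero, ← hf, h f, F.map_zero]

theorem mk_distinguished_of_iso {X Y Z X' Y' : D} {f : X ⟶ Y} {g : Y ⟶ Z}
    {h : Z ⟶ X⟦(1 : ℤ)⟧} {f' : X' ⟶ Y'} (hT : Triangle.mk f g h ∈ distTriang D)
    (α : X ≅ X') (β : Y ≅ Y') (comm : f ≫ β.hom = α.hom ≫ f') :
    Triangle.mk f' (β.inv ≫ g) (h ≫ α.hom⟦(1 : ℤ)⟧') ∈ distTriang D := by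
  refine isomorphic_distinguished _ hT _ (Triangle.isoMk _ _ α β (Iso.refl Z) comm ?_ ?_).symm
  · exact (Category.comp_id g).trans (β.hom_inv_id_assoc g).symm
  · exact (Category.id_comp _).symm

namespace IsRightConvolution

/-- The length is positive because the target of a convolution of length `0` is literally `b 0`. -/
theorem of_iso {m : ℕ} {b b' : ℕ → D} {d : ∀ i, b i ⟶ b (i + 1)}
    {d' : ∀ i, b' i ⟶ b' (i + 1)} {c : D} {e : b (m + 1) ⟶ c}
    (h : IsRightConvolution (m + 1) b d c e) (φ : ∀ i, b i ≅ b' i)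
    (comm : ∀ i, d i ≫ (φ (i + 1)).hom = (φ i).hom ≫ d' i) :
    IsRightConvolution (m + 1) b' d' c ((φ (m + 1)).inv ≫ e) := by
  induction m generalizing b b' with
  | zero =>
    cases h with
    | one _ _ _ _ _ hT => exact .one b' d' _ _ _ (mk_distinguished_of_iso hT (φ 0) (φ 1) (comm 0))
  | succ m ih =>
    cases h with
    | step _ _ _ x j _ hT d₀ hd₀ _ _ htrunc =>
      have lift_comm : ((φ 1).inv ≫ j) ≫ d₀ ≫ (φ 2).hom = d' 1 := by
        rw [Category.assoc, reassoc_of% hd₀, comm 1, Iso.inv_hom_id_assoc]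
      let ψ : ∀ i, truncObj b x i ≅ truncObj b' x i
        | 0 => Iso.refl x
        | i + 1 => φ (i + 2)
      have ψ_comm : ∀ i, truncMap b d x d₀ i ≫ (ψ (i + 1)).hom =
          (ψ i).hom ≫ truncMap b' d' x (d₀ ≫ (φ 2).hom) i
        | 0 => (Category.id_comp _).symm
        | i + 1 => comm (i + 2)
      exact .step m b' d' x _ _ (mk_distinguished_of_iso hT (φ 0) (φ 1) (comm 0)) _ lift_comm _ _
        (ih htrunc ψ ψ_comm)

variable {D' : Type u'} [Category.{v'} D'] [HasZeroObject D'] [HasShift D' ℤ]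
  [Preadditive D'] [∀ n : ℤ, (CategoryTheory.shiftFunctor D' n).Additive] [Pretriangulated D']

theorem map {m : ℕ} {b : ℕ → D} {d : ∀ i, b i ⟶ b (i + 1)} {c : D} {e : b m ⟶ c}
    (h : IsRightConvolution m b d c e) (F : D ⥤ D') [F.CommShift ℤ] [F.IsTriangulated] :
    IsRightConvolution m (fun i => F.obj (b i)) (fun i => F.map (d i)) (F.obj c) (F.map e) := by
  induction h with
  | zero b d => simpa only [F.map_id] using .zero (fun i => F.obj (b i)) (fun i => F.map (d i))
  | one b d x j δ hT => exact .one _ (fun i => F.map (d i)) _ _ _ (F.map_distinguished _ hT)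
  | step m b d x j δ hT d₀ hd₀ c e _ ih =>
    have lift_comm : F.map j ≫ F.map d₀ = F.map (d 1) := by rw [← F.map_comp, hd₀]
    -- Both sides are the same object, but only after a case split on `i`.
    let ψ : ∀ i, F.obj (truncObj b x i) ≅ truncObj (fun i => F.obj (b i)) (F.obj x) i
      | 0 => Iso.refl _
      | _ + 1 => Iso.refl _
    have ψ_comm : ∀ i, F.map (truncMap b d x d₀ i) ≫ (ψ (i + 1)).hom =
        (ψ i).hom ≫ truncMap (fun i => F.obj (b i)) (fun i => F.map (d i)) _ (F.map d₀) i
      | 0 => (Category.comp_id _).trans (Category.id_comp _).symm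
      | _ + 1 => (Category.comp_id _).trans (Category.id_comp _).symm
    have ψ_inv_comp : (ψ (m + 1)).inv ≫ F.map e = F.map e := Category.id_comp _
    exact .step m _ (fun i => F.map (d i)) _ _ _ (F.map_distinguished _ hT) _ lift_comm _ _
      (ψ_inv_comp ▸ ih.of_iso ψ ψ_comm)

end IsRightConvolution

theorem map_right_convolution_general
    {D' : Type u'} [Category.{v'} D'] [HasZeroObject D'] [HasShift D' ℤ]
    [Preadditive D'] [∀ n : ℤ, (CategoryTheory.shiftFunctor D' n).Additive]
    [Pretriangulated D']
    (m : ℕ) (b : ℕ → D) (d : ∀ i, b i ⟶ b (i + 1))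
    (hvanish : ∀ i j, i < j → j ≤ m → ∀ r : ℤ, 0 < r → ∀ f : (b i)⟦r⟧ ⟶ b j, f = 0)
    (c : D) (e : b m ⟶ c) (hconv : IsRightConvolution m b d c e)
    (F : D ⥤ D') [F.CommShift ℤ] [F.IsTriangulated] [F.Full] :
    (∀ i j, i < j → j ≤ m → ∀ r : ℤ, 0 < r →
      ∀ g : (F.obj (b i))⟦r⟧ ⟶ F.obj (b j), g = 0) ∧
    IsRightConvolution m (fun i => F.obj (b i)) (fun i => F.map (d i))
      (F.obj c) (F.map e) :=
  ⟨fun i j hij hj r hr => shift_map_obj_hom_eq_zero F (hvanish i j hij hj r hr), hconv.map F⟩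

/-- The image of a right convolution under a fully faithful exact
functor is a right convolution of the image complex. -/
theorem map_right_convolution
    {D' : Type u'} [Category.{v'} D'] [HasZeroObject D'] [HasShift D' ℤ]
    [Preadditive D'] [∀ n : ℤ, (CategoryTheory.shiftFunctor D' n).Additive]
    [Pretriangulated D']
    (m : ℕ) (b : ℕ → D) (d : ∀ i, b i ⟶ b (i + 1))
    (hcomplex : ∀ i, i + 1 < m → d i ≫ d (i + 1) = 0)
    (hvanish : ∀ i j, i < j → j ≤ m → ∀ r : ℤ, 0 < r → ∀ f : (b i)⟦r⟧ ⟶ b j, f = 0)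
    (c : D) (e : b m ⟶ c) (hconv : IsRightConvolution m b d c e)
    (F : D ⥤ D') [F.CommShift ℤ] [F.IsTriangulated] [F.Full] [F.Faithful] :
    (∀ i j, i < j → j ≤ m → ∀ r : ℤ, 0 < r →
      ∀ g : (F.obj (b i))⟦r⟧ ⟶ F.obj (b j), g = 0) ∧
    IsRightConvolution m (fun i => F.obj (b i)) (fun i => F.map (d i))
      (F.obj c) (F.map e) :=
  map_right_convolution_general m b d hvanish c e hconv F
end
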